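/- Suppose 𝕡 is the chain pomset on [s] (the total order 1 ≺ 2 ≺ … ≺ s) and all blocks have the same dimension, k_1 = k_2 = … = k_s = t. Let K be such that t divides ⌈log_m K⌉. Then for every ideal I of 𝕡, every I-perfect (n, K, d) (𝕡,π)-code 𝒞 ⊆ ℤ_m^n is an MDS (𝕡,π)-code. -/

import Mathlib

open scoped Classical

noncomputable section

/-- Lee weight of an element of `ZMod m`. -/
def leeWt (m : ℕ) (a : ZMod m) : ℕ := min a.val (m - a.val)

/-- Block Lee weight of the `i`-th block of `u`. -/
def blockWt (m s : ℕ) (π : Fin s → ℕ) (u : ∀ i : Fin s, Fin (π i) → ZMod m)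
    (i : Fin s) : ℕ :=
  Finset.univ.sup fun t => leeWt m (u i t)

/-- The `(𝕡,π)`-weight of `u`. -/
def pomsetWt (m s : ℕ) (P : PartialOrder (Fin s)) (π : Fin s → ℕ)
    (u : ∀ i : Fin s, Fin (π i) → ZMod m) : ℕ :=
  ∑ i : Fin s,
    if ∃ j, j ≠ i ∧ P.le i j ∧ 0 < blockWt m s π u j then m / 2
    else blockWt m s π u i

/-- The pomset block distance. -/
def pomsetDist (m s : ℕ) (P : PartialOrder (Fin s)) (π : Fin s → ℕ)
    (u v : ∀ i : Fin s, Fin (π i) → ZMod m) : ℕ :=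
  pomsetWt m s P π (u - v)

/-- An ideal of the pomset `𝕡`, given by its count function `I : [s] → {0,…,⌊m/2⌋}`. -/
def IsIdeal (m s : ℕ) (P : PartialOrder (Fin s)) (I : Fin s → ℕ) : Prop :=
  (∀ a, I a ≤ m / 2) ∧ ∀ a b, 0 < I a → P.le b a → b ≠ a → I b = m / 2

/-- An ideal has full count if every element of its root set has count `⌊m/2⌋`. -/
def FullCount (m : ℕ) {s : ℕ} (I : Fin s → ℕ) : Prop :=
  ∀ a, 0 < I a → I a = m / 2

/-- The cardinality `|I|` of an ideal. -/
def idealCard {s : ℕ} (I : Fin s → ℕ) : ℕ := ∑ a, I a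

/-- The cardinality `|I*|` of the root set of an ideal. -/
def rootCard {s : ℕ} (I : Fin s → ℕ) : ℕ :=
  (Finset.univ.filter fun a => 0 < I a).card

/-- `Σ_{i ∈ I*} k_i`. -/
def rootSum {s : ℕ} (π I : Fin s → ℕ) : ℕ :=
  ∑ a ∈ Finset.univ.filter (fun a => 0 < I a), π a

/-- The `I`-ball centered at `u`. -/
def ballI (m s : ℕ) (π : Fin s → ℕ) (I : Fin s → ℕ)
    (u : ∀ i : Fin s, Fin (π i) → ZMod m) :
    Set (∀ i : Fin s, Fin (π i) → ZMod m) :=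
  {v | ∀ i, blockWt m s π (u - v) i ≤ I i}

/-- `𝒞` is `I`-perfect: the `I`-balls centered at codewords are pairwise
disjoint and cover the whole space. -/
def IPerfect (m s : ℕ) (π : Fin s → ℕ) (I : Fin s → ℕ)
    (C : Set (∀ i : Fin s, Fin (π i) → ZMod m)) : Prop :=
  (C.Pairwise fun c c' => Disjoint (ballI m s π I c) (ballI m s π I c')) ∧
  (⋃ c ∈ C, ballI m s π I c) = Set.univ

/-- The `r`-ball centered at `u`. -/
def ballR (m s : ℕ) (P : PartialOrder (Fin s)) (π : Fin s → ℕ) (r : ℕ)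
    (u : ∀ i : Fin s, Fin (π i) → ZMod m) :
    Set (∀ i : Fin s, Fin (π i) → ZMod m) :=
  {v | pomsetDist m s P π u v ≤ r}

/-- The standard dot product on `ℤ_m^n`. -/
def dotProd (m s : ℕ) (π : Fin s → ℕ)
    (c v : ∀ i : Fin s, Fin (π i) → ZMod m) : ZMod m :=
  ∑ i, ∑ t, c i t * v i t

/-- The dual code `𝒞^⊥`. -/
def dualCode (m s : ℕ) (π : Fin s → ℕ)
    (C : Set (∀ i : Fin s, Fin (π i) → ZMod m)) :
    Set (∀ i : Fin s, Fin (π i) → ZMod m) :=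
  {v | ∀ c ∈ C, dotProd m s π c v = 0}

/-- The dual pomset, encoded by the opposite partial order. -/
def dualOrder (s : ℕ) (P : PartialOrder (Fin s)) : PartialOrder (Fin s) where
  le a b := P.le b a
  lt a b := P.lt b a
  le_refl a := P.le_refl a
  le_trans a b c h1 h2 := P.le_trans _ _ _ h2 h1
  lt_iff_le_not_ge a b := P.lt_iff_le_not_ge b a
  le_antisymm a b h1 h2 := (P.le_antisymm _ _ h1 h2).symm

/-- The minimum `(𝕡,π)`-distance of a code. -/
def minDist (m s : ℕ) (P : PartialOrder (Fin s)) (π : Fin s → ℕ)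
    (C : Set (∀ i : Fin s, Fin (π i) → ZMod m)) : ℕ :=
  sInf {r | ∃ c ∈ C, ∃ c' ∈ C, c ≠ c' ∧ r = pomsetWt m s P π (c - c')}

/-- `𝒞` is an MDS `(𝕡,π)`-code: it attains the Singleton bound
`n − ⌈log_m K⌉ ≥ max { Σ_{i∈I*} k_i : I ideal, |I*| = ⌊(d−1)/⌊m/2⌋⌋ }`. -/
def IsMDS (m s : ℕ) (P : PartialOrder (Fin s)) (π : Fin s → ℕ)
    (C : Set (∀ i : Fin s, Fin (π i) → ZMod m)) : Prop :=
  (∀ I, IsIdeal m s P I →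
      rootCard I = (minDist m s P π C - 1) / (m / 2) →
      rootSum π I ≤ (∑ i, π i) - Nat.clog m (Nat.card ↥C)) ∧
  (∃ I, IsIdeal m s P I ∧
      rootCard I = (minDist m s P π C - 1) / (m / 2) ∧
      rootSum π I = (∑ i, π i) - Nat.clog m (Nat.card ↥C))

/-- The chain pomset on `[s]`: the usual total order on `Fin s`. -/
def chainOrder (s : ℕ) : PartialOrder (Fin s) := inferInstance

/-!
In a chain, an ideal `I` other than the whole pomset has a threshold `j`: its count is full before
`j`, not full at `j`, and zero after `j`. Let `C` be `I`-perfect with at least two codewords. An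
`I`-ball does not constrain the blocks before `j`, so two distinct codewords differ in some block
`≥ j`. It fixes the blocks after `j`, so every choice of these is realised by a codeword, and some
choice by more than one, since a ball does not fill the block `j`. Counting gives
`∑ i > j, k_i < ⌈log_m |C|⌉ ≤ ∑ i ≥ j, k_i`, while the distances between codewords show that the
minimum distance `d` satisfies `⌊(d - 1) / ⌊m/2⌋⌋ = j`, the blocks being numbered from `0`. Hence
`C` is MDS as soon as `⌈log_m |C|⌉` is a tail sum `∑ i ≥ q, k_i`; for blocks of equal dimension `t`
the tail sums are the multiples of `t` up to the length of the code.
-/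

section Weights

variable {m s : ℕ} {π : Fin s → ℕ} {u : ∀ i : Fin s, Fin (π i) → ZMod m} {i : Fin s}

theorem leeWt_le_half (a : ZMod m) : leeWt m a ≤ m / 2 := by
  unfold leeWt
  omega

theorem leeWt_eq_zero_iff [NeZero m] {a : ZMod m} : leeWt m a = 0 ↔ a = 0 := by
  have hlt := ZMod.val_lt a
  rw [← ZMod.val_eq_zero, leeWt]
  omega

theorem leeWt_natCast_half [NeZero m] : leeWt m ((m / 2 : ℕ) : ZMod m) = m / 2 := by
  have hm : m ≠ 0 := NeZero.ne m
  rw [leeWt, ZMod.val_cast_of_lt (by omega)]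
  omega

theorem leeWt_le_blockWt (x : Fin (π i)) : leeWt m (u i x) ≤ blockWt m s π u i :=
  Finset.le_sup (f := fun x => leeWt m (u i x)) (Finset.mem_univ x)

theorem blockWt_le_half : blockWt m s π u i ≤ m / 2 :=
  Finset.sup_le fun _ _ => leeWt_le_half _

theorem blockWt_eq_zero_iff [NeZero m] : blockWt m s π u i = 0 ↔ u i = 0 := by
  simp only [blockWt, ← Nat.bot_eq_zero, Finset.sup_eq_bot_iff, Finset.mem_univ, true_imp_iff]
  simp only [Nat.bot_eq_zero, leeWt_eq_zero_iff, funext_iff, Pi.zero_apply]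

theorem blockWt_pos_iff [NeZero m] : 0 < blockWt m s π u i ↔ u i ≠ 0 := by
  rw [Nat.pos_iff_ne_zero, ne_eq, blockWt_eq_zero_iff]

theorem card_mul_half_lt_pomsetWt [NeZero m] {P : PartialOrder (Fin s)} {D : Finset (Fin s)}
    (hD : ∀ a ∈ D, P.le a i) (hiD : i ∉ D) (hi : u i ≠ 0) :
    D.card * (m / 2) < pomsetWt m s P π u := by
  have hpos : 0 < blockWt m s π u i := blockWt_pos_iff.2 hi
  have hfull : ∀ a ∈ D, (if ∃ b, b ≠ a ∧ P.le a b ∧ 0 < blockWt m s π u b then m / 2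
      else blockWt m s π u a) = m / 2 := fun a ha =>
    if_pos ⟨i, (ne_of_mem_of_not_mem ha hiD).symm, hD a ha, hpos⟩
  rw [pomsetWt, ← Finset.sum_const_nat hfull]
  refine Finset.sum_lt_sum_of_subset (Finset.subset_univ D) (Finset.mem_univ i) hiD ?_
    fun _ _ _ => Nat.zero_le _
  split_ifs
  exacts [hpos.trans_le blockWt_le_half, hpos]

theorem pomsetWt_le_card_mul_half [NeZero m] {P : PartialOrder (Fin s)} {D : Finset (Fin s)}
    (hD : ∀ a b, P.le a b → u b ≠ 0 → a ∈ D) : pomsetWt m s P π u ≤ D.card * (m / 2) := by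
  rw [pomsetWt, ← Finset.sum_subset (Finset.subset_univ D), ← smul_eq_mul]
  · refine Finset.sum_le_card_nsmul D _ _ fun a _ => ?_
    split_ifs
    exacts [le_rfl, blockWt_le_half]
  · intro a _ ha
    rw [if_neg, blockWt_eq_zero_iff]
    · exact not_not.1 fun h => ha (hD a a (P.le_refl a) h)
    · rintro ⟨b, -, hab, hb⟩
      exact ha (hD a b hab (blockWt_pos_iff.1 hb))

end Weights

section MinDist

variable {m s : ℕ} {P : PartialOrder (Fin s)} {π : Fin s → ℕ}
  {C : Set (∀ i : Fin s, Fin (π i) → ZMod m)}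

theorem minDist_le {c c' : ∀ i : Fin s, Fin (π i) → ZMod m} (hc : c ∈ C) (hc' : c' ∈ C)
    (hne : c ≠ c') : minDist m s P π C ≤ pomsetWt m s P π (c - c') :=
  Nat.sInf_le ⟨c, hc, c', hc', hne, rfl⟩

theorem lt_minDist {N : ℕ} (hC : C.Nontrivial)
    (hN : ∀ c ∈ C, ∀ c' ∈ C, c ≠ c' → N < pomsetWt m s P π (c - c')) :
    N < minDist m s P π C := by
  obtain ⟨a, ha, b, hb, hab⟩ := hC
  obtain ⟨c, hc, c', hc', hne, hmin⟩ := Nat.sInf_mem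
    (s := {r | ∃ c ∈ C, ∃ c' ∈ C, c ≠ c' ∧ r = pomsetWt m s P π (c - c')})
    ⟨_, a, ha, b, hb, hab, rfl⟩
  rw [minDist, hmin]
  exact hN c hc c' hc' hne

end MinDist

theorem card_blocks {ι : Type*} [Fintype ι] (m : ℕ) (k : ι → ℕ) :
    Nat.card (∀ i, Fin (k i) → ZMod m) = m ^ ∑ i, k i := by
  simp only [Nat.card_pi, Nat.card_zmod, Finset.prod_const, Finset.card_univ, Fintype.card_fin,
    Finset.prod_pow_eq_pow_sum]

namespace IPerfect

variable {m s : ℕ} {π I : Fin s → ℕ} {C : Set (∀ i : Fin s, Fin (π i) → ZMod m)}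

theorem exists_mem_ballI (h : IPerfect m s π I C) (v : ∀ i : Fin s, Fin (π i) → ZMod m) :
    ∃ c ∈ C, v ∈ ballI m s π I c := by
  simpa only [Set.mem_iUnion, exists_prop] using h.2.ge (Set.mem_univ v)

variable [NeZero m] {T : Finset (Fin s)}

theorem eq_of_mem_ballI (h : IPerfect m s π I C) {c c' : ∀ i : Fin s, Fin (π i) → ZMod m}
    (hc : c ∈ C) (hc' : c' ∈ C) (hmem : c' ∈ ballI m s π I c) : c = c' := by
  by_contra hne
  have hself : c' ∈ ballI m s π I c' := fun i => by
    rw [sub_self, blockWt_eq_zero_iff.2 rfl]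
    exact Nat.zero_le _
  exact Set.disjoint_left.1 (h.1 hc hc' hne) hmem hself

theorem injOn_restrict (h : IPerfect m s π I C) (hT : ∀ i ∉ T, I i = m / 2) :
    Set.InjOn T.restrict C := by
  intro c hc c' hc' heq
  refine h.eq_of_mem_ballI hc hc' fun i => ?_
  by_cases hi : i ∈ T
  · have hci : c i = c' i := congrFun heq ⟨i, hi⟩
    rw [blockWt_eq_zero_iff.2 (sub_eq_zero.2 hci)]
    exact Nat.zero_le _
  · exact blockWt_le_half.trans_eq (hT i hi).symm

theorem exists_ne_half (h : IPerfect m s π I C) (hC : C.Nontrivial) : ∃ i, I i ≠ m / 2 := by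
  obtain ⟨c, hc, c', hc', hne⟩ := hC
  by_contra! hfull
  exact hne (h.injOn_restrict (T := ∅) (fun i _ => hfull i) hc hc' (Subsingleton.elim _ _))

theorem exists_mem_restrict_eq (h : IPerfect m s π I C) (hT : ∀ i ∈ T, I i = 0)
    (v : ∀ i : Fin s, Fin (π i) → ZMod m) :
    ∃ c ∈ C, v ∈ ballI m s π I c ∧ T.restrict c = T.restrict v := by
  obtain ⟨c, hc, hv⟩ := h.exists_mem_ballI v
  refine ⟨c, hc, hv, funext fun i => ?_⟩
  have hi : blockWt m s π (c - v) i = 0 := Nat.le_zero.1 ((hv i).trans_eq (hT i i.2))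
  exact sub_eq_zero.1 (blockWt_eq_zero_iff.1 hi)

theorem surjOn_restrict (h : IPerfect m s π I C) (hT : ∀ i ∈ T, I i = 0) :
    Set.SurjOn T.restrict C Set.univ := by
  intro w _
  obtain ⟨v, rfl⟩ := Subtype.surjective_restrict (β := fun i => Fin (π i) → ZMod m) (· ∈ T) w
  obtain ⟨c, hc, -, hcv⟩ := h.exists_mem_restrict_eq hT v
  exact ⟨c, hc, hcv⟩

theorem not_injOn_restrict (h : IPerfect m s π I C) (hT : ∀ i ∈ T, I i = 0) {j : Fin s}
    (hjT : j ∉ T) (hπj : 0 < π j) (hj : I j < m / 2) : ¬ Set.InjOn T.restrict C := by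
  intro hinj
  obtain ⟨a, ha, -⟩ := h.exists_mem_ballI 0
  -- Moving `a` by `⌊m/2⌋` in block `j` leaves its ball without changing the blocks in `T`.
  let v := Function.update a j (a j - fun _ => ((m / 2 : ℕ) : ZMod m))
  obtain ⟨b, hb, hbv, hbT⟩ := h.exists_mem_restrict_eq hT v
  have hva : T.restrict v = T.restrict a := funext fun i =>
    Function.update_of_ne (ne_of_mem_of_not_mem i.2 hjT) _ _
  obtain rfl : b = a := hinj hb ha (hbT.trans hva)
  have hle : leeWt m ((b - v) j ⟨0, hπj⟩) ≤ I j := (leeWt_le_blockWt _).trans (hbv j)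
  have hjv : (b - v) j ⟨0, hπj⟩ = ((m / 2 : ℕ) : ZMod m) := by simp [v]
  rw [hjv, leeWt_natCast_half] at hle
  exact hj.not_ge hle

theorem card_le_pow_sum (h : IPerfect m s π I C) (hT : ∀ i ∉ T, I i = m / 2) :
    Nat.card C ≤ m ^ ∑ i ∈ T, π i := by
  rw [← Finset.sum_coe_sort, ← card_blocks]
  exact Nat.card_le_card_of_injective _ (h.injOn_restrict hT).injective

theorem pow_sum_lt_card (h : IPerfect m s π I C) (hT : ∀ i ∈ T, I i = 0) {j : Fin s}
    (hjT : j ∉ T) (hπj : 0 < π j) (hj : I j < m / 2) : m ^ ∑ i ∈ T, π i < Nat.card C := by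
  have hsurj : Function.Surjective (C.domRestrict T.restrict) :=
    Set.surjOn_iff_surjective.1 (h.surjOn_restrict hT)
  rw [← Finset.sum_coe_sort, ← card_blocks]
  refine (Nat.card_le_card_of_surjective _ hsurj).lt_of_ne fun hcard => ?_
  have hbij := (Nat.bijective_iff_surjective_and_card _).2 ⟨hsurj, hcard.symm⟩
  exact h.not_injOn_restrict hT hjT hπj hj (Set.injOn_iff_injective.2 hbij.1)

end IPerfect

section Chain

variable {m s : ℕ} {π I : Fin s → ℕ} {j : Fin s}

theorem eq_Iio_of_isLowerSet_of_card_eq {D : Finset (Fin s)} (hD : IsLowerSet (D : Set (Fin s)))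
    (hcard : D.card = j) : D = Finset.Iio j := by
  refine Finset.eq_of_subset_of_card_le (fun x hx => ?_) (by rw [Fin.card_Iio, hcard])
  have hsub : Finset.Iic x ⊆ D := fun y hy => hD (Finset.mem_Iic.1 hy) hx
  have hle := Finset.card_le_card hsub
  rw [Fin.card_Iic, hcard] at hle
  exact Finset.mem_Iio.2 hle

theorem IsIdeal.rootSum_eq_sum_Iio (hI : IsIdeal m s (chainOrder s) I) (hj : rootCard I = j) :
    rootSum π I = ∑ i ∈ Finset.Iio j, π i := by
  have hlower : IsLowerSet ({a | 0 < I a} : Set (Fin s)) := fun a b hba ha => by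
    rcases eq_or_ne b a with rfl | hne
    · exact ha
    · exact (ha.trans_le (hI.1 a)).trans_eq (hI.2 a b ha hba hne).symm
  rw [rootSum, eq_Iio_of_isLowerSet_of_card_eq (by simpa using hlower) hj]

/-- The ideal of the chain pomset with full count on the elements below `j` and count zero
elsewhere. -/
def initialIdeal (m : ℕ) {s : ℕ} (j : Fin s) (i : Fin s) : ℕ := if i < j then m / 2 else 0

theorem isIdeal_initialIdeal : IsIdeal m s (chainOrder s) (initialIdeal m j) := by
  refine ⟨fun a => ?_, fun a b ha hba _ => ?_⟩
  · unfold initialIdeal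
    split_ifs <;> omega
  · have haj : a < j := by
      by_contra h
      simp [initialIdeal, h] at ha
    exact if_pos (lt_of_le_of_lt hba haj)

theorem rootCard_initialIdeal (hm : 1 < m) : rootCard (initialIdeal m j) = j := by
  have hpos : 0 < m / 2 := by omega
  have hroots : (Finset.univ.filter fun a => 0 < initialIdeal m j a) = Finset.Iio j := by
    ext a
    simp [initialIdeal, Nat.pos_iff_ne_zero, hpos.ne']
  rw [rootCard, hroots, Fin.card_Iio]

theorem isMDS_chain_of_sum_Iio_eq {C : Set (∀ i : Fin s, Fin (π i) → ZMod m)} (hm : 1 < m)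
    (hdist : (minDist m s (chainOrder s) π C - 1) / (m / 2) = j)
    (hsum : ∑ i ∈ Finset.Iio j, π i = (∑ i, π i) - Nat.clog m (Nat.card C)) :
    IsMDS m s (chainOrder s) π C := by
  have hroot : rootCard (initialIdeal m j) = j := rootCard_initialIdeal hm
  refine ⟨fun J hJ hcard => ?_, initialIdeal m j, isIdeal_initialIdeal, ?_, ?_⟩
  · rw [hJ.rootSum_eq_sum_Iio (hcard.trans hdist), hsum]
  · rw [hroot, hdist]
  · rw [isIdeal_initialIdeal.rootSum_eq_sum_Iio hroot, hsum]

/-- `j` is the threshold of the count function `I`: the count is full before `j`, not full at `j`,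
and zero after `j`. Every ideal of the chain pomset other than the whole pomset has a threshold. -/
structure IsThreshold (m : ℕ) {s : ℕ} (I : Fin s → ℕ) (j : Fin s) : Prop where
  eq_half_of_lt : ∀ i < j, I i = m / 2
  lt_half : I j < m / 2
  eq_zero_of_gt : ∀ i > j, I i = 0

theorem IsThreshold.one_lt (hj : IsThreshold m I j) : 1 < m := by
  have hlt := hj.lt_half
  omega

theorem IsThreshold.eq_half_of_notMem_Ici (hj : IsThreshold m I j) :
    ∀ i ∉ Finset.Ici j, I i = m / 2 :=
  fun i hi => hj.eq_half_of_lt i (not_le.1 (mt Finset.mem_Ici.2 hi))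

theorem IsThreshold.eq_zero_of_mem_Ioi (hj : IsThreshold m I j) :
    ∀ i ∈ Finset.Ioi j, I i = 0 :=
  fun i hi => hj.eq_zero_of_gt i (Finset.mem_Ioi.1 hi)

theorem IsIdeal.exists_isThreshold (hI : IsIdeal m s (chainOrder s) I) (h : ∃ i, I i ≠ m / 2) :
    ∃ j, IsThreshold m I j := by
  obtain ⟨j, hj⟩ := exists_minimal_of_wellFoundedLT (fun i => I i ≠ m / 2) h
  refine ⟨j, fun i hij => not_not.1 (hj.not_prop_of_lt hij), (hI.1 j).lt_of_ne hj.prop, ?_⟩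
  intro i hij
  by_contra hi
  exact hj.prop (hI.2 i j (Nat.pos_of_ne_zero hi) hij.le hij.ne)

end Chain

namespace IPerfect

variable {m s : ℕ} [NeZero m] {π I : Fin s → ℕ} {C : Set (∀ i : Fin s, Fin (π i) → ZMod m)}
  {j : Fin s}

theorem clog_card_le (h : IPerfect m s π I C) (hj : IsThreshold m I j) :
    Nat.clog m (Nat.card C) ≤ ∑ i ∈ Finset.Ici j, π i :=
  Nat.clog_le_of_le_pow (h.card_le_pow_sum hj.eq_half_of_notMem_Ici)

theorem sum_Ioi_lt_clog_card (h : IPerfect m s π I C) (hj : IsThreshold m I j) (hπj : 0 < π j) :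
    ∑ i ∈ Finset.Ioi j, π i < Nat.clog m (Nat.card C) :=
  (Nat.lt_clog_iff_pow_lt hj.one_lt).2
    (h.pow_sum_lt_card hj.eq_zero_of_mem_Ioi Finset.notMem_Ioi_self hπj hj.lt_half)

theorem clog_card_eq_sum_Ici (h : IPerfect m s π I C) (hj : IsThreshold m I j) (hπj : 0 < π j)
    {q : Fin s} (hq : Nat.clog m (Nat.card C) = ∑ i ∈ Finset.Ici q, π i) :
    Nat.clog m (Nat.card C) = ∑ i ∈ Finset.Ici j, π i := by
  have hqj : q ≤ j := by
    by_contra! hjq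
    have hsub : Finset.Ici q ⊆ Finset.Ioi j := fun i hi =>
      Finset.mem_Ioi.2 (hjq.trans_le (Finset.mem_Ici.1 hi))
    exact (h.sum_Ioi_lt_clog_card hj hπj).not_ge
      (hq.trans_le (Finset.sum_le_sum_of_subset hsub))
  exact (h.clog_card_le hj).antisymm
    (hq ▸ Finset.sum_le_sum_of_subset (Finset.Ici_subset_Ici.2 hqj))

theorem mul_half_lt_minDist (h : IPerfect m s π I C) (hj : IsThreshold m I j)
    (hC : C.Nontrivial) : j * (m / 2) < minDist m s (chainOrder s) π C := by
  refine lt_minDist hC fun c hc c' hc' hne => ?_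
  obtain ⟨i, hji, hi⟩ : ∃ i, j ≤ i ∧ c i ≠ c' i := by
    by_contra! heq
    exact hne (h.injOn_restrict hj.eq_half_of_notMem_Ici hc hc'
      (funext fun i => heq i (Finset.mem_Ici.1 i.2)))
  rw [← Fin.card_Iio j]
  exact card_mul_half_lt_pomsetWt (fun a ha => ((Finset.mem_Iio.1 ha).trans_le hji).le)
    (fun h => (Finset.mem_Iio.1 h).not_ge hji) (sub_ne_zero.2 hi)

theorem minDist_le_succ_mul_half (h : IPerfect m s π I C) (hj : IsThreshold m I j)
    (hπj : 0 < π j) : minDist m s (chainOrder s) π C ≤ (j + 1) * (m / 2) := by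
  have hninj := h.not_injOn_restrict hj.eq_zero_of_mem_Ioi Finset.notMem_Ioi_self hπj hj.lt_half
  obtain ⟨a, ha, b, hb, heq, hne⟩ : ∃ a ∈ C, ∃ b ∈ C,
      (Finset.Ioi j).restrict a = (Finset.Ioi j).restrict b ∧ a ≠ b := by
    simpa only [Set.InjOn, not_forall, exists_prop] using hninj
  refine (minDist_le ha hb hne).trans ?_
  rw [← Fin.card_Iic j]
  refine pomsetWt_le_card_mul_half fun x y hxy hy => Finset.mem_Iic.2 ?_
  have hyj : y ≤ j := by
    by_contra! hjy
    exact hy (sub_eq_zero.2 (congrFun heq ⟨y, Finset.mem_Ioi.2 hjy⟩))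
  exact le_trans hxy hyj

theorem minDist_sub_one_div_half (h : IPerfect m s π I C) (hj : IsThreshold m I j)
    (hC : C.Nontrivial) (hπj : 0 < π j) :
    (minDist m s (chainOrder s) π C - 1) / (m / 2) = j := by
  have hlower := h.mul_half_lt_minDist hj hC
  have hupper := h.minDist_le_succ_mul_half hj hπj
  exact Nat.div_eq_of_lt_le (by omega) (by omega)

end IPerfect

theorem exists_eq_sum_Ici_of_dvd {s t N : ℕ} {π : Fin s → ℕ} (hπ : ∀ i, π i = t) (hN : N ≠ 0)
    (hle : N ≤ ∑ i, π i) (hdvd : t ∣ N) : ∃ q, N = ∑ i ∈ Finset.Ici q, π i := by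
  obtain ⟨k, rfl⟩ := hdvd
  obtain ⟨ht, hk⟩ := mul_ne_zero_iff.1 hN
  simp only [hπ, Finset.sum_const, Finset.card_univ, Fintype.card_fin, smul_eq_mul, Fin.card_Ici]
    at hle ⊢
  have hks : k ≤ s := Nat.le_of_mul_le_mul_left (hle.trans_eq (mul_comm s t))
    (Nat.pos_of_ne_zero ht)
  exact ⟨⟨s - k, by omega⟩, by rw [Nat.sub_sub_self hks, mul_comm]⟩

theorem exists_clog_card_eq_sum_Ici {m s t : ℕ} {π : Fin s → ℕ} (hm : 1 < m)
    (hπ : ∀ i, π i = t) {C : Set (∀ i : Fin s, Fin (π i) → ZMod m)} (hC : C.Nontrivial)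
    (hdvd : t ∣ Nat.clog m (Nat.card C)) :
    ∃ q, Nat.clog m (Nat.card C) = ∑ i ∈ Finset.Ici q, π i := by
  have : NeZero m := .of_gt hm
  have hpos : 0 < Nat.clog m (Nat.card C) :=
    Nat.clog_pos hm (Set.one_lt_ncard_iff_nontrivial.2 hC)
  have hcard : Nat.card C ≤ m ^ ∑ i, π i := card_blocks m π ▸ Finite.card_subtype_le _
  exact exists_eq_sum_Ici_of_dvd hπ hpos.ne' (Nat.clog_le_of_le_pow hcard) hdvd

theorem chain_I_perfect_implies_mds_general {m s : ℕ} [NeZero m] {π : Fin s → ℕ}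
    (hπ : ∀ i, 0 < π i) {I : Fin s → ℕ} (hI : IsIdeal m s (chainOrder s) I)
    {C : Set (∀ i : Fin s, Fin (π i) → ZMod m)} (hC : C.Nontrivial)
    (htail : ∃ q, Nat.clog m (Nat.card C) = ∑ i ∈ Finset.Ici q, π i)
    (hperf : IPerfect m s π I C) : IsMDS m s (chainOrder s) π C := by
  obtain ⟨j, hj⟩ := hI.exists_isThreshold (hperf.exists_ne_half hC)
  obtain ⟨q, hq⟩ := htail
  have hclog := hperf.clog_card_eq_sum_Ici hj (hπ j) hq
  have hsplit : ∑ i ∈ Finset.Iio j, π i + ∑ i ∈ Finset.Ici j, π i = ∑ i, π i := by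
    have hcompl : (Finset.Iio j)ᶜ = Finset.Ici j := by
      ext
      simp
    rw [← hcompl, Finset.sum_add_sum_compl]
  refine isMDS_chain_of_sum_Iio_eq hj.one_lt (hperf.minDist_sub_one_div_half hj hC (hπ j)) ?_
  rw [hclog, ← hsplit, Nat.add_sub_cancel]

/-- for the chain pomset with equal block dimensions and `t ∣ ⌈log_m K⌉`,
every `I`-perfect `(n,K,d)` code is MDS. -/
theorem chain_I_perfect_implies_mds
    (m s : ℕ) (hm : 4 ≤ m) (hs : 1 ≤ s)
    (π : Fin s → ℕ) (hπ : ∀ i, 0 < π i)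
    (t : ℕ) (ht : ∀ i, π i = t)
    (n K d : ℕ) (hn : n = ∑ i, π i)
    (hdiv : t ∣ Nat.clog m K)
    (I : Fin s → ℕ) (hI : IsIdeal m s (chainOrder s) I)
    (C : Set (∀ i : Fin s, Fin (π i) → ZMod m))
    (hK : Nat.card ↥C = K) (hK2 : 2 ≤ K)
    (hd : IsLeast {r | ∃ c ∈ C, ∃ c' ∈ C, c ≠ c' ∧
      r = pomsetWt m s (chainOrder s) π (c - c')} d)
    (hperf : IPerfect m s π I C) :
    IsMDS m s (chainOrder s) π C := by
  have : NeZero m := ⟨by omega⟩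
  subst hK
  have hC : C.Nontrivial := Set.one_lt_ncard_iff_nontrivial.1 hK2
  exact chain_I_perfect_implies_mds_general hπ hI hC
    (exists_clog_card_eq_sum_Ici (by omega) ht hC hdiv) hperf

end
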